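/- Assume (σ_min + σ_min,2)/2 < τ < (σ_max + σ_max,2)/2 and τ ≠ σᵢ for all 1 ≤ i ≤ N, and let r ∈ ℝ^{M+N} satisfy Π r = r. Set d₂ = min_{2≤i≤N} |σᵢ − τ|. Then σ₁ ≠ σ_max and σ₁ ≠ σ_min, and for every j ∈ ℕ there exists w ∈ K_j(B₁, r) such that ‖B₁ w + r‖ ≤ 2 · (1 − 2/(1 + (σ_max + τ)/d₂))^{⌊j/2⌋} · ‖r‖, where ⌊·⌋ denotes the integer part. -/

import Mathlib

open Matrix

noncomputable def vnorm {ι : Type*} [Fintype ι] (x : ι → ℝ) : ℝ :=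
  Real.sqrt (∑ i, x i ^ 2)

noncomputable def Krylov {ι : Type*} [Fintype ι] [DecidableEq ι]
    (B : Matrix ι ι ℝ) (r : ι → ℝ) (j : ℕ) : Submodule ℝ (ι → ℝ) :=
  Submodule.span ℝ {x | ∃ i < j, x = (B ^ i) *ᵥ r}

/-!
For a polynomial `p` with `p(0) = 1` and `deg p ≤ j`, the vector `p(B₁) r` is `B₁ w + r` for some
`w` in the `j`-th Krylov space, and `‖p(B₁) r‖ ≤ max |p(l)| ‖r‖`, the maximum being over those
eigenvalues `l` of `B₁` whose eigenvectors are not orthogonal to `r`. As `r` is fixed by the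
deflation, these `l` lie among `-τ` and `±σᵢ - τ` with `i ≠ 1`, and the hypotheses on `τ` place all
of them in `d₂ ≤ |l| ≤ σ_max + τ`. On this set take `p(l) = q(l²)`, where `q` is the Chebyshev
polynomial of degree `⌊j/2⌋` transplanted to `[d₂², (σ_max + τ)²]` and scaled so that `q(0) = 1`.
-/

section Chebyshev

open Polynomial

/-- The normalised Chebyshev polynomial of degree `k` of the interval `[α, β]`: the affine map
sends `[α, β]` to `[-1, 1]` (reversing it) and the scaling makes the value at `0` equal to `1`. -/
noncomputable def chebyshevResidual (α β : ℝ) (k : ℕ) : ℝ[X] :=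
  C ((Chebyshev.T ℝ k).eval ((β + α) / (β - α)))⁻¹ *
    (Chebyshev.T ℝ k).comp (C ((β + α) / (β - α)) - C (2 / (β - α)) * X)

variable {α β : ℝ}

lemma one_le_eval_T_interval (hα : 0 ≤ α) (hαβ : α < β) (k : ℕ) :
    1 ≤ (Chebyshev.T ℝ k).eval ((β + α) / (β - α)) :=
  Chebyshev.one_le_eval_T_real k <| (one_le_div (sub_pos.2 hαβ)).2 (by linarith)

lemma chebyshevResidual_eval_zero (hα : 0 ≤ α) (hαβ : α < β) (k : ℕ) :
    (chebyshevResidual α β k).eval 0 = 1 := by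
  have := one_le_eval_T_interval hα hαβ k
  simp [chebyshevResidual, eval_comp, (by positivity : (Chebyshev.T ℝ k).eval _ ≠ 0)]

lemma natDegree_chebyshevResidual_le (k : ℕ) :
    (chebyshevResidual α β k).natDegree ≤ k :=
  calc (chebyshevResidual α β k).natDegree
      ≤ (Chebyshev.T ℝ k).natDegree *
          (C ((β + α) / (β - α)) - C (2 / (β - α)) * X).natDegree :=
        (natDegree_C_mul_le _ _).trans natDegree_comp_le
    _ ≤ k * 1 := by
        rw [Chebyshev.natDegree_T, Int.natAbs_natCast]
        gcongr
        compute_degree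
    _ = k := mul_one k

lemma abs_eval_chebyshevResidual_le (hα : 0 ≤ α) (hαβ : α < β) (k : ℕ) {x : ℝ}
    (hx : x ∈ Set.Icc α β) :
    |(chebyshevResidual α β k).eval x| ≤ ((Chebyshev.T ℝ k).eval ((β + α) / (β - α)))⁻¹ := by
  have hpos : 0 < β - α := sub_pos.2 hαβ
  have hmap : |(β + α) / (β - α) - 2 / (β - α) * x| ≤ 1 := by
    rw [show (β + α) / (β - α) - 2 / (β - α) * x = (β + α - 2 * x) / (β - α) by ring, abs_div,
      abs_of_pos hpos, div_le_one hpos, abs_le]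
    constructor <;> linarith [hx.1, hx.2]
  have hT := one_le_eval_T_interval hα hαβ k
  simpa [chebyshevResidual, eval_comp, abs_mul, abs_of_pos (zero_lt_one.trans_le hT)] using
    mul_le_of_le_one_right (by positivity) (Chebyshev.abs_eval_T_real_le_one k hmap)

lemma half_pow_le_eval_T {ρ : ℝ} (hρ : 0 < ρ) (k : ℕ) :
    ρ ^ k / 2 ≤ (Chebyshev.T ℝ k).eval ((ρ + ρ⁻¹) / 2) := by
  have hexp : Real.exp (k * Real.log ρ) = ρ ^ k := by
    rw [Real.exp_nat_mul, Real.exp_log hρ]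
  rw [← Real.cosh_log hρ, Chebyshev.T_real_cosh, Int.cast_natCast, Real.cosh_eq, hexp]
  linarith [Real.exp_pos (-(k * Real.log ρ))]

lemma inv_eval_T_sq_interval_le {a b : ℝ} (ha : 0 < a) (hab : a < b) (k : ℕ) :
    ((Chebyshev.T ℝ k).eval ((b ^ 2 + a ^ 2) / (b ^ 2 - a ^ 2)))⁻¹ ≤
      2 * (1 - 2 / (1 + b / a)) ^ k := by
  have hb : 0 < b := ha.trans hab
  have hsub : 0 < b - a := sub_pos.2 hab
  obtain ⟨ρ, hρ⟩ : ∃ ρ, ρ = (b + a) / (b - a) := ⟨_, rfl⟩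
  have hρ_pos : 0 < ρ := by rw [hρ]; positivity
  have hfactor : 1 - 2 / (1 + b / a) = ρ⁻¹ := by
    rw [hρ]
    field_simp
    ring
  have hjoukowski : (b ^ 2 + a ^ 2) / (b ^ 2 - a ^ 2) = (ρ + ρ⁻¹) / 2 := by
    rw [hρ, show b ^ 2 - a ^ 2 = (b - a) * (b + a) by ring]
    field_simp
    ring
  calc ((Chebyshev.T ℝ k).eval ((b ^ 2 + a ^ 2) / (b ^ 2 - a ^ 2)))⁻¹
      ≤ (ρ ^ k / 2)⁻¹ := by
        rw [hjoukowski]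
        exact inv_anti₀ (by positivity) (half_pow_le_eval_T hρ_pos k)
    _ = 2 * (1 - 2 / (1 + b / a)) ^ k := by rw [hfactor, inv_div, inv_pow, div_eq_mul_inv]

theorem exists_polynomial_abs_eval_le {a b : ℝ} (ha : 0 < a) (hab : a < b) (k : ℕ) :
    ∃ p : ℝ[X], p.eval 0 = 1 ∧ p.natDegree ≤ 2 * k ∧
      ∀ l : ℝ, |l| ∈ Set.Icc a b → |p.eval l| ≤ 2 * (1 - 2 / (1 + b / a)) ^ k := by
  have hsq : a ^ 2 < b ^ 2 := by gcongr
  refine ⟨(chebyshevResidual (a ^ 2) (b ^ 2) k).comp (X ^ 2), ?_, ?_, fun l hl => ?_⟩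
  · simpa [eval_comp] using chebyshevResidual_eval_zero (sq_nonneg a) hsq k
  · rw [natDegree_comp, natDegree_X_pow, mul_comm]
    gcongr
    exact natDegree_chebyshevResidual_le k
  · have hl_sq : l ^ 2 ∈ Set.Icc (a ^ 2) (b ^ 2) := by
      rw [← sq_abs l]
      exact ⟨pow_le_pow_left₀ ha.le hl.1 2, pow_le_pow_left₀ (abs_nonneg l) hl.2 2⟩
    simpa [eval_comp] using (abs_eval_chebyshevResidual_le (sq_nonneg a) hsq k hl_sq).trans
      (inv_eval_T_sq_interval_le ha hab k)

end Chebyshev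

section SymmetricMatrix

open Polynomial

variable {ι R : Type*} [Fintype ι]

lemma mulVec_dotProduct_of_isSymm [CommSemiring R] {B : Matrix ι ι R} (hB : B.IsSymm)
    (x y : ι → R) : B *ᵥ x ⬝ᵥ y = x ⬝ᵥ B *ᵥ y := by
  rw [dotProduct_mulVec, ← mulVec_transpose, hB.eq]

lemma dotProduct_eq_zero_of_mulVec_eq_smul [CommRing R] [IsDomain R] {B : Matrix ι ι R}
    (hB : B.IsSymm) {x y : ι → R} {l μ : R} (hx : B *ᵥ x = l • x) (hy : B *ᵥ y = μ • y)
    (hne : l ≠ μ) : x ⬝ᵥ y = 0 := by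
  have h := mulVec_dotProduct_of_isSymm hB x y
  rw [hx, hy, smul_dotProduct, dotProduct_smul, smul_eq_mul, smul_eq_mul] at h
  exact (mul_eq_mul_right_iff.1 h).resolve_left hne

lemma vnorm_eq_norm_toLp (x : ι → ℝ) : vnorm x = ‖WithLp.toLp 2 x‖ := by
  simp [vnorm, EuclideanSpace.norm_eq]

variable [DecidableEq ι]

lemma isSymm_aeval [CommSemiring R] {B : Matrix ι ι R} (hB : B.IsSymm) (p : R[X]) :
    (aeval B p).IsSymm := by
  induction p using Polynomial.induction_on' with
  | add p q hp hq => simpa using hp.add hq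
  | monomial n a => simpa [aeval_monomial, ← Algebra.smul_def] using (hB.pow n).smul a

lemma aeval_mulVec_of_mulVec_eq_smul [CommRing R] {B : Matrix ι ι R} {x : ι → R} {l : R}
    (hx : B *ᵥ x = l • x) (p : R[X]) : aeval B p *ᵥ x = p.eval l • x := by
  have h := Module.End.aeval_apply_of_mem_apply_eq_smul (f := toLinAlgEquiv' B) (p := p) hx
  rwa [aeval_algHom_apply] at h

theorem vnorm_aeval_mulVec_le {B : Matrix ι ι ℝ} (hB : B.IsSymm) {r : ι → ℝ} {p : ℝ[X]} {c : ℝ}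
    (hc : 0 ≤ c)
    (hp : ∀ (l : ℝ) (x : ι → ℝ), B *ᵥ x = l • x → r ⬝ᵥ x ≠ 0 → |p.eval l| ≤ c) :
    vnorm (aeval B p *ᵥ r) ≤ c * vnorm r := by
  have hH : B.IsHermitian := (conjTranspose_eq_transpose_of_trivial B).trans hB.eq
  have hinner (v : ι → ℝ) (i : ι) :
      inner ℝ (WithLp.toLp 2 v) (hH.eigenvectorBasis i) = v ⬝ᵥ hH.eigenvectorBasis i := by
    simp [EuclideanSpace.inner_eq_star_dotProduct, dotProduct_comm]
  rw [vnorm_eq_norm_toLp, vnorm_eq_norm_toLp]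
  refine le_of_sq_le_sq ?_ (by positivity)
  rw [mul_pow, ← hH.eigenvectorBasis.sum_sq_norm_inner_left,
    ← hH.eigenvectorBasis.sum_sq_norm_inner_left, Finset.mul_sum]
  refine Finset.sum_le_sum fun i _ => ?_
  have heig := hH.mulVec_eigenvectorBasis i
  rw [hinner, hinner, mulVec_dotProduct_of_isSymm (isSymm_aeval hB p),
    aeval_mulVec_of_mulVec_eq_smul heig, dotProduct_smul, smul_eq_mul, norm_mul, mul_pow]
  rcases eq_or_ne (r ⬝ᵥ hH.eigenvectorBasis i) 0 with h0 | h0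
  · simp [h0]
  · gcongr
    exact hp _ _ heig h0

lemma aeval_mulVec_mem_krylov (B : Matrix ι ι ℝ) (r : ι → ℝ) {p : ℝ[X]} {j : ℕ}
    (hp : p.degree < j) : aeval B p *ᵥ r ∈ Krylov B r j := by
  rw [aeval_def, eval₂_eq_sum, Polynomial.sum, sum_mulVec]
  refine Submodule.sum_mem _ fun i hi => ?_
  have hij : i < j := by exact_mod_cast (le_degree_of_mem_supp i hi).trans_lt hp
  rw [← Algebra.smul_def, smul_mulVec]
  exact Submodule.smul_mem _ _ (Submodule.subset_span ⟨i, hij, rfl⟩)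

lemma exists_mem_krylov_mulVec_add_eq (B : Matrix ι ι ℝ) (r : ι → ℝ) {p : ℝ[X]} {j : ℕ}
    (hp0 : p.eval 0 = 1) (hpj : p.natDegree ≤ j) :
    ∃ w ∈ Krylov B r j, B *ᵥ w + r = aeval B p *ᵥ r := by
  have hp : p ≠ 0 := by
    rintro rfl
    simp at hp0
  have hdeg : p.divX.degree < j := (degree_divX_lt hp).trans_le (degree_le_of_natDegree_le hpj)
  refine ⟨aeval B p.divX *ᵥ r, aeval_mulVec_mem_krylov B r hdeg, ?_⟩
  conv_rhs => rw [← X_mul_divX_add p, coeff_zero_eq_eval_zero, hp0]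
  simp [add_mulVec]

theorem exists_mem_krylov_vnorm_le {B : Matrix ι ι ℝ} (hB : B.IsSymm) {r : ι → ℝ} {a b : ℝ}
    (ha : 0 < a) (hab : a < b)
    (hspec : ∀ (l : ℝ) (x : ι → ℝ), B *ᵥ x = l • x → r ⬝ᵥ x ≠ 0 → |l| ∈ Set.Icc a b) (j : ℕ) :
    ∃ w ∈ Krylov B r j, vnorm (B *ᵥ w + r) ≤ 2 * (1 - 2 / (1 + b / a)) ^ (j / 2) * vnorm r := by
  obtain ⟨p, hp0, hpdeg, hpabs⟩ := exists_polynomial_abs_eval_le ha hab (j / 2)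
  obtain ⟨w, hw, hres⟩ := exists_mem_krylov_mulVec_add_eq B r hp0 (hpdeg.trans (Nat.mul_div_le j 2))
  have hfactor : 0 ≤ 1 - 2 / (1 + b / a) := by
    have : 1 ≤ b / a := (one_le_div ha).2 hab.le
    rw [sub_nonneg, div_le_one (by positivity)]
    linarith
  refine ⟨w, hw, ?_⟩
  rw [hres]
  exact vnorm_aeval_mulVec_le hB (by positivity) fun l x hx hrx => hpabs l (hspec l x hx hrx)

end SymmetricMatrix

section DeflatedAugmented

variable {m n R : Type*} [DecidableEq m] [DecidableEq n] [CommRing R]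

/-- The symmetric matrix `[[-τ I, A], [Aᵀ, -τ I]]`, written `B` in the paper: the augmented matrix
of `A` shifted by the target `τ`. -/
def shiftedAugmented (A : Matrix m n R) (τ : R) : Matrix (m ⊕ n) (m ⊕ n) R :=
  fromBlocks ((-τ) • 1) A Aᵀ ((-τ) • 1)

/-- The matrix `diag(I - u uᵀ, I - v vᵀ)`, written `Π` in the paper. For unit vectors `u` and `v` it
is the orthogonal projection that removes the directions `(u, 0)` and `(0, v)`. -/
def deflator (u : m → R) (v : n → R) : Matrix (m ⊕ n) (m ⊕ n) R :=
  fromBlocks (1 - vecMulVec u u) 0 0 (1 - vecMulVec v v)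

lemma isSymm_shiftedAugmented (A : Matrix m n R) (τ : R) : (shiftedAugmented A τ).IsSymm :=
  .fromBlocks (isSymm_one.smul _) rfl (isSymm_one.smul _)

lemma isSymm_deflator (u : m → R) (v : n → R) : (deflator u v).IsSymm :=
  .fromBlocks (isSymm_one.sub (transpose_vecMulVec u u)) transpose_zero
    (isSymm_one.sub (transpose_vecMulVec v v))

variable [Fintype m] [Fintype n]

/-- The matrix `Π B Π` of the correction equation, written `B₁` in the paper. -/
def deflatedAugmented (A : Matrix m n R) (τ : R) (u : m → R) (v : n → R) :
    Matrix (m ⊕ n) (m ⊕ n) R :=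
  deflator u v * shiftedAugmented A τ * deflator u v

lemma isSymm_deflatedAugmented (A : Matrix m n R) (τ : R) (u : m → R) (v : n → R) :
    (deflatedAugmented A τ u v).IsSymm := by
  rw [Matrix.IsSymm, deflatedAugmented, transpose_mul, transpose_mul, (isSymm_deflator u v).eq,
    (isSymm_shiftedAugmented A τ).eq, Matrix.mul_assoc]

lemma deflator_mulVec_sumElim (u : m → R) (v : n → R) (y : m → R) (z : n → R) :
    deflator u v *ᵥ Sum.elim y z = Sum.elim (y - (u ⬝ᵥ y) • u) (z - (v ⬝ᵥ z) • v) := by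
  simp [deflator, fromBlocks_mulVec, sub_mulVec, vecMulVec_mulVec]

lemma shiftedAugmented_mulVec_sumElim (A : Matrix m n R) (τ : R) (y : m → R) (z : n → R) :
    shiftedAugmented A τ *ᵥ Sum.elim y z = Sum.elim (A *ᵥ z - τ • y) (Aᵀ *ᵥ y - τ • z) := by
  simp [shiftedAugmented, fromBlocks_mulVec, neg_mulVec, smul_mulVec, sub_eq_add_neg, add_comm]

lemma shiftedAugmented_mulVec_eq_smul {A : Matrix m n R} (τ : R) {u : m → R} {v : n → R} {s c : R}
    (hAv : A *ᵥ v = s • u) (hAu : Aᵀ *ᵥ u = s • v) (hc : c * c = 1) :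
    shiftedAugmented A τ *ᵥ Sum.elim u (c • v) = (c * s - τ) • Sum.elim u (c • v) := by
  have hleft : A *ᵥ (c • v) - τ • u = (c * s - τ) • u := by
    rw [mulVec_smul, hAv, smul_smul, sub_smul]
  have hright : Aᵀ *ᵥ u - τ • c • v = (c * s - τ) • c • v := by
    rw [hAu, smul_smul, smul_smul, ← sub_smul]
    congr 1
    linear_combination -s * hc
  rw [shiftedAugmented_mulVec_sumElim, hleft, hright]
  ext (i | i) <;> rfl

lemma deflatedAugmented_mulVec_eq_smul {A : Matrix m n R} (τ : R) {u u₁ : m → R} {v v₁ : n → R}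
    {s c : R} (hu : u₁ ⬝ᵥ u = 0) (hv : v₁ ⬝ᵥ v = 0) (hAv : A *ᵥ v = s • u)
    (hAu : Aᵀ *ᵥ u = s • v) (hc : c * c = 1) :
    deflatedAugmented A τ u₁ v₁ *ᵥ Sum.elim u (c • v) = (c * s - τ) • Sum.elim u (c • v) := by
  have hfix : deflator u₁ v₁ *ᵥ Sum.elim u (c • v) = Sum.elim u (c • v) := by
    simp [deflator_mulVec_sumElim, hu, hv]
  rw [deflatedAugmented, ← mulVec_mulVec, ← mulVec_mulVec, hfix,
    shiftedAugmented_mulVec_eq_smul τ hAv hAu hc, mulVec_smul, hfix]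

end DeflatedAugmented

section OrthogonalColumns

variable {m R : Type*} [Fintype m] [DecidableEq m] [CommRing R] {U : Matrix m m R}

lemma col_dotProduct_col_of_ne (hU : Uᵀ * U = 1) {i j : m} (hij : i ≠ j) :
    U.col i ⬝ᵥ U.col j = 0 :=
  (congrFun₂ hU i j).trans (one_apply_ne hij)

lemma eq_smul_col_of_dotProduct_col_eq_zero (hU : Uᵀ * U = 1) {k : m} {y : m → R}
    (hy : ∀ i ≠ k, U.col i ⬝ᵥ y = 0) : y = (U.col k ⬝ᵥ y) • U.col k := by
  have hcoord : Uᵀ *ᵥ y = Pi.single k (U.col k ⬝ᵥ y) := by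
    ext i
    obtain rfl | hi := eq_or_ne i k
    · rw [Pi.single_eq_same]
      rfl
    · rw [Pi.single_eq_of_ne hi]
      exact hy i hi
  calc y = U *ᵥ (Uᵀ *ᵥ y) := by rw [mulVec_mulVec, mul_eq_one_comm.1 hU, one_mulVec]
    _ = (U.col k ⬝ᵥ y) • U.col k := by rw [hcoord]; ext; simp [mul_comm]

end OrthogonalColumns

section SingularValueDecomposition

variable {m n : Type*} [Fintype m] [Fintype n] [DecidableEq m] [DecidableEq n]

/-- `A = U Σ Vᵀ` is a singular value decomposition. The rectangular diagonal `Σ` has its entry `σ i`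
at `(e i, i)`, so that `e` pairs the right singular vectors with left ones; for `m × n` matrices
with `n ≤ m` it is the inclusion `Fin n ↪ Fin m`. -/
structure IsSVD (A : Matrix m n ℝ) (U : Matrix m m ℝ) (V : Matrix n n ℝ) (e : n ↪ m)
    (σ : n → ℝ) : Prop where
  transpose_mul_self_left : Uᵀ * U = 1
  transpose_mul_self_right : Vᵀ * V = 1
  nonneg : ∀ i, 0 ≤ σ i
  eq_mul : A = U * Matrix.of (fun i j => if i = e j then σ j else 0) * Vᵀ

namespace IsSVD

variable {A : Matrix m n ℝ} {U : Matrix m m ℝ} {V : Matrix n n ℝ} {e : n ↪ m} {σ : n → ℝ}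

lemma mul_right (h : IsSVD A U V e σ) :
    A * V = U * Matrix.of (fun i j => if i = e j then σ j else 0) := by
  rw [h.eq_mul, Matrix.mul_assoc, h.transpose_mul_self_right, Matrix.mul_one]

lemma transpose_mul_left (h : IsSVD A U V e σ) :
    Aᵀ * U = V * Matrix.of (fun j i => if i = e j then σ j else 0) := by
  rw [h.eq_mul, transpose_mul, transpose_mul, transpose_transpose, Matrix.mul_assoc,
    Matrix.mul_assoc, h.transpose_mul_self_left, Matrix.mul_one]
  rfl

lemma mulVec_col (h : IsSVD A U V e σ) (i : n) : A *ᵥ V.col i = σ i • U.col (e i) :=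
  calc A *ᵥ V.col i = (A * V).col i := rfl
    _ = σ i • U.col (e i) := by
      ext
      simp [h.mul_right, mul_apply, mul_comm]

lemma transpose_mulVec_col (h : IsSVD A U V e σ) (i : n) :
    Aᵀ *ᵥ U.col (e i) = σ i • V.col i :=
  calc Aᵀ *ᵥ U.col (e i) = (Aᵀ * U).col (e i) := rfl
    _ = σ i • V.col i := by
      ext
      simp [h.transpose_mul_left, mul_apply, mul_comm]

lemma transpose_mulVec_col_of_notMem_range (h : IsSVD A U V e σ) {j : m} (hj : j ∉ Set.range e) :
    Aᵀ *ᵥ U.col j = 0 :=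
  calc Aᵀ *ᵥ U.col j = (Aᵀ * U).col j := rfl
    _ = 0 := by
      have hne (i : n) : j ≠ e i := fun hji => hj ⟨i, hji.symm⟩
      ext
      simp [h.transpose_mul_left, mul_apply, hne]

lemma col_dotProduct_eq_zero (h : IsSVD A U V e σ) {k i : n} (hi : i ≠ k) {τ l : ℝ} {y : m → ℝ}
    {z : n → ℝ}
    (hx : deflatedAugmented A τ (U.col (e k)) (V.col k) *ᵥ Sum.elim y z = l • Sum.elim y z)
    (hpos : l ≠ σ i - τ) (hneg : l ≠ -σ i - τ) :
    U.col (e i) ⬝ᵥ y = 0 ∧ V.col i ⬝ᵥ z = 0 := by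
  -- `(uᵢ, ±vᵢ)` is an eigenvector of the symmetric `B₁`, so it is orthogonal to the eigenvectors of
  -- every other eigenvalue.
  have hcoupled {c : ℝ} (hc : c * c = 1) (hne : l ≠ c * σ i - τ) :
      U.col (e i) ⬝ᵥ y + c * (V.col i ⬝ᵥ z) = 0 := by
    have heig := deflatedAugmented_mulVec_eq_smul τ
      (col_dotProduct_col_of_ne h.transpose_mul_self_left (e.injective.ne hi.symm))
      (col_dotProduct_col_of_ne h.transpose_mul_self_right hi.symm)
      (h.mulVec_col i) (h.transpose_mulVec_col i) hc
    simpa using dotProduct_eq_zero_of_mulVec_eq_smul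
      (isSymm_deflatedAugmented A τ (U.col (e k)) (V.col k)) heig hx hne.symm
  have hplus := hcoupled (c := 1) (by ring) (by simpa using hpos)
  have hminus := hcoupled (c := -1) (by ring) (by simpa using hneg)
  constructor <;> linarith

lemma col_dotProduct_eq_zero_of_notMem_range (h : IsSVD A U V e σ) (k : n) {j : m}
    (hj : j ∉ Set.range e) {τ l : ℝ} {y : m → ℝ} {z : n → ℝ}
    (hx : deflatedAugmented A τ (U.col (e k)) (V.col k) *ᵥ Sum.elim y z = l • Sum.elim y z)
    (hne : l ≠ -τ) : U.col j ⬝ᵥ y = 0 := by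
  have hjk : e k ≠ j := fun hkj => hj ⟨k, hkj⟩
  have heig := deflatedAugmented_mulVec_eq_smul (v := 0) (s := 0) (c := 1) τ
    (col_dotProduct_col_of_ne h.transpose_mul_self_left hjk) (dotProduct_zero (V.col k))
    (by simp) (by simpa using h.transpose_mulVec_col_of_notMem_range hj) (one_mul 1)
  simpa using dotProduct_eq_zero_of_mulVec_eq_smul
    (isSymm_deflatedAugmented A τ (U.col (e k)) (V.col k)) heig hx (by simpa using hne.symm)

lemma deflator_mulVec_eq_zero (h : IsSVD A U V e σ) {k : n} {y : m → ℝ} {z : n → ℝ}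
    (hy : ∀ j ≠ e k, U.col j ⬝ᵥ y = 0) (hz : ∀ i ≠ k, V.col i ⬝ᵥ z = 0) :
    deflator (U.col (e k)) (V.col k) *ᵥ Sum.elim y z = 0 := by
  rw [deflator_mulVec_sumElim,
    ← eq_smul_col_of_dotProduct_col_eq_zero h.transpose_mul_self_left hy,
    ← eq_smul_col_of_dotProduct_col_eq_zero h.transpose_mul_self_right hz]
  simp

theorem eigenvalue_deflatedAugmented_eq_or_exists (h : IsSVD A U V e σ) {k : n} {τ l : ℝ}
    {x : m ⊕ n → ℝ} (hx : deflatedAugmented A τ (U.col (e k)) (V.col k) *ᵥ x = l • x)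
    (hdefl : deflator (U.col (e k)) (V.col k) *ᵥ x ≠ 0) :
    l = -τ ∨ ∃ i ≠ k, l = σ i - τ ∨ l = -σ i - τ := by
  obtain ⟨y, z, rfl⟩ : ∃ y z, x = Sum.elim y z :=
    ⟨x ∘ Sum.inl, x ∘ Sum.inr, (Sum.elim_comp_inl_inr x).symm⟩
  contrapose! hdefl
  obtain ⟨hτ, hσ⟩ := hdefl
  have hpaired (i : n) (hi : i ≠ k) := h.col_dotProduct_eq_zero hi hx (hσ i hi).1 (hσ i hi).2
  refine h.deflator_mulVec_eq_zero (fun j hj => ?_) fun i hi => (hpaired i hi).2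
  by_cases hmem : j ∈ Set.range e
  · obtain ⟨i, rfl⟩ := hmem
    exact (hpaired i (ne_of_apply_ne e hj)).1
  · exact h.col_dotProduct_eq_zero_of_notMem_range k hmem hx hτ

end IsSVD

end SingularValueDecomposition

section Target

variable {n R : Type*} [Field R] [LinearOrder R] [IsStrictOrderedRing R] {σ : n → R} {k : n} {τ : R}

lemma ne_of_isGreatest_of_closest (hclosest : ∀ i ≠ k, |σ k - τ| < |σ i - τ|) {σmax σmax2 : R}
    (hσmax : IsGreatest (Set.range σ) σmax) (hσmax2 : IsGreatest (σ '' {i | i ≠ k}) σmax2)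
    (hτ : τ ≤ (σmax + σmax2) / 2) : σ k ≠ σmax := by
  rintro rfl
  obtain ⟨i, hi, rfl⟩ := hσmax2.1
  have hle : σ i ≤ σ k := hσmax.2 ⟨i, rfl⟩
  refine (hclosest i hi).not_ge ?_
  calc |σ i - τ| ≤ σ k - τ := abs_le.2 ⟨by linarith, by linarith⟩
    _ ≤ |σ k - τ| := le_abs_self _

lemma ne_of_isLeast_of_closest (hclosest : ∀ i ≠ k, |σ k - τ| < |σ i - τ|) {σmin σmin2 : R}
    (hσmin : IsLeast (Set.range σ) σmin) (hσmin2 : IsLeast (σ '' {i | i ≠ k}) σmin2)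
    (hτ : (σmin + σmin2) / 2 ≤ τ) : σ k ≠ σmin := by
  rintro rfl
  obtain ⟨i, hi, rfl⟩ := hσmin2.1
  have hle : σ k ≤ σ i := hσmin.2 ⟨i, rfl⟩
  refine (hclosest i hi).not_ge ?_
  calc |σ i - τ| ≤ -(σ k - τ) := abs_le.2 ⟨by linarith, by linarith⟩
    _ ≤ |σ k - τ| := neg_le_abs _

lemma le_target_of_isLeast_abs_sub (hσ : ∀ i, 0 ≤ σ i) {σmin d : R}
    (hσmin : IsLeast (Set.range σ) σmin) (hne : σ k ≠ σmin) (hτ : σmin ≤ τ)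
    (hd : IsLeast ((fun i => |σ i - τ|) '' {i | i ≠ k}) d) : d ≤ τ := by
  obtain ⟨i, rfl⟩ := hσmin.1
  have hik : i ≠ k := fun hik => hne (congrArg σ hik.symm)
  calc d ≤ |σ i - τ| := hd.2 ⟨i, hik, rfl⟩
    _ = τ - σ i := by rw [abs_sub_comm, abs_of_nonneg (sub_nonneg.2 hτ)]
    _ ≤ τ := sub_le_self τ (hσ i)

lemma abs_sub_mem_Icc {s b d : R} (hs : 0 ≤ s) (hτ : 0 ≤ τ) (hsb : s ≤ b) (hd : d ≤ |s - τ|) :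
    |s - τ| ∈ Set.Icc d (b + τ) ∧ |-s - τ| ∈ Set.Icc d (b + τ) := by
  have hdiff : |s - τ| ≤ s + τ := abs_le.2 ⟨by linarith, by linarith⟩
  have hsum : |-s - τ| = s + τ := by
    rw [← neg_add', abs_neg, abs_of_nonneg (add_nonneg hs hτ)]
  rw [hsum]
  exact ⟨⟨hd, by linarith⟩, by linarith, by linarith⟩

end Target

theorem minres_bound_exact_interior_general {m n : Type*} [Fintype m] [Fintype n]
    [DecidableEq m] [DecidableEq n] {A : Matrix m n ℝ} {U : Matrix m m ℝ} {V : Matrix n n ℝ}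
    {e : n ↪ m} {σ : n → ℝ} (hsvd : IsSVD A U V e σ) {k : n} {τ : ℝ}
    (hclosest : ∀ i ≠ k, |σ k - τ| < |σ i - τ|) {σmax σmax2 σmin σmin2 : ℝ}
    (hσmax : IsGreatest (Set.range σ) σmax) (hσmax2 : IsGreatest (σ '' {i | i ≠ k}) σmax2)
    (hσmin : IsLeast (Set.range σ) σmin) (hσmin2 : IsLeast (σ '' {i | i ≠ k}) σmin2)
    (hτ1 : (σmin + σmin2) / 2 < τ) (hτ2 : τ < (σmax + σmax2) / 2) {d2 : ℝ}
    (hd2 : IsLeast ((fun i => |σ i - τ|) '' {i | i ≠ k}) d2) {r : m ⊕ n → ℝ}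
    (hr : deflator (U.col (e k)) (V.col k) *ᵥ r = r) :
    σ k ≠ σmax ∧ σ k ≠ σmin ∧
    ∀ j : ℕ, ∃ w ∈ Krylov (deflatedAugmented A τ (U.col (e k)) (V.col k)) r j,
      vnorm (deflatedAugmented A τ (U.col (e k)) (V.col k) *ᵥ w + r) ≤
        2 * (1 - 2 / (1 + (σmax + τ) / d2)) ^ (j / 2) * vnorm r := by
  have hne_max := ne_of_isGreatest_of_closest hclosest hσmax hσmax2 hτ2.le
  have hne_min := ne_of_isLeast_of_closest hclosest hσmin hσmin2 hτ1.le
  have hlt_max : τ < σmax := by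
    linarith [hσmax.2 (Set.image_subset_range _ _ hσmax2.1)]
  have hmin_lt : σmin < τ := by
    linarith [hσmin.2 (Set.image_subset_range _ _ hσmin2.1)]
  have hd_pos : 0 < d2 := by
    obtain ⟨i, hi, rfl⟩ := hd2.1
    exact (abs_nonneg _).trans_lt (hclosest i hi)
  have hd_le := le_target_of_isLeast_abs_sub hsvd.nonneg hσmin hne_min hmin_lt.le hd2
  have hτ_pos : 0 < τ := hd_pos.trans_le hd_le
  refine ⟨hne_max, hne_min, exists_mem_krylov_vnorm_le (isSymm_deflatedAugmented _ _ _ _) hd_pos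
    (by linarith) fun l x hx hrx => ?_⟩
  have hdefl : deflator (U.col (e k)) (V.col k) *ᵥ x ≠ 0 := fun h0 => hrx <| by
    rw [← hr, mulVec_dotProduct_of_isSymm (isSymm_deflator _ _), h0, dotProduct_zero]
  have hIcc (i : n) (hi : i ≠ k) :=
    abs_sub_mem_Icc (hsvd.nonneg i) hτ_pos.le (hσmax.2 ⟨i, rfl⟩) (hd2.2 ⟨i, hi, rfl⟩)
  rcases hsvd.eigenvalue_deflatedAugmented_eq_or_exists hx hdefl with rfl | ⟨i, hi, rfl | rfl⟩
  · rw [abs_neg, abs_of_pos hτ_pos]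
    exact ⟨hd_le, by linarith⟩
  · exact (hIcc i hi).1
  · exact (hIcc i hi).2

/-- Theorem 3.3(iii). MINRES bound for the JDSVD correction equation with
exact singular vectors, in the interior case
`(σ_min + σ_min,2)/2 < τ < (σ_max + σ_max,2)/2`. -/
theorem minres_bound_exact_interior {M N : ℕ} (hN : 2 ≤ N) (hMN : N ≤ M)
    (A : Matrix (Fin M) (Fin N) ℝ)
    (U : Matrix (Fin M) (Fin M) ℝ) (V : Matrix (Fin N) (Fin N) ℝ)
    (hU : Uᵀ * U = 1) (hV : Vᵀ * V = 1)
    (σ : Fin N → ℝ) (hσ : ∀ i, 0 ≤ σ i)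
    (S : Matrix (Fin M) (Fin N) ℝ)
    (hS : ∀ i j, S i j = if (i : ℕ) = (j : ℕ) then σ j else 0)
    (hA : A = U * S * Vᵀ)
    (τ : ℝ) (hτ0 : 0 ≤ τ)
    (hclosest : ∀ i : Fin N, i ≠ ⟨0, by omega⟩ → |σ ⟨0, by omega⟩ - τ| < |σ i - τ|)
    (hτσ : ∀ i : Fin N, τ ≠ σ i)
    (σmax σmax2 σmin σmin2 : ℝ)
    (hσmax : IsGreatest (Set.range σ) σmax)
    (hσmax2 : IsGreatest (σ '' {i : Fin N | i ≠ ⟨0, by omega⟩}) σmax2)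
    (hσmin : IsLeast (Set.range σ) σmin)
    (hσmin2 : IsLeast (σ '' {i : Fin N | i ≠ ⟨0, by omega⟩}) σmin2)
    (hτ1 : (σmin + σmin2) / 2 < τ) (hτ2 : τ < (σmax + σmax2) / 2)
    (d2 : ℝ)
    (hd2 : IsLeast ((fun i => |σ i - τ|) '' {i : Fin N | i ≠ ⟨0, by omega⟩}) d2)
    (u1 : Fin M → ℝ) (hu1 : u1 = fun i => U i ⟨0, by omega⟩)
    (v1 : Fin N → ℝ) (hv1 : v1 = fun i => V i ⟨0, by omega⟩)
    (B P B1 : Matrix (Fin M ⊕ Fin N) (Fin M ⊕ Fin N) ℝ)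
    (hB : B = Matrix.fromBlocks ((-τ) • 1) A Aᵀ ((-τ) • 1))
    (hP : P = Matrix.fromBlocks (1 - vecMulVec u1 u1) 0 0 (1 - vecMulVec v1 v1))
    (hB1 : B1 = P * B * P)
    (r : Fin M ⊕ Fin N → ℝ) (hr : P *ᵥ r = r) :
    σ ⟨0, by omega⟩ ≠ σmax ∧ σ ⟨0, by omega⟩ ≠ σmin ∧
    ∀ j : ℕ, ∃ w ∈ Krylov B1 r j,
      vnorm (B1 *ᵥ w + r) ≤
        2 * (1 - 2 / (1 + (σmax + τ) / d2)) ^ (j / 2) * vnorm r := by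
  subst hu1 hv1 hB hP hB1
  exact minres_bound_exact_interior_general (e := Fin.castLEEmb hMN)
    ⟨hU, hV, hσ, hA.trans (by congr; ext; simp [hS, Fin.ext_iff])⟩
    hclosest hσmax hσmax2 hσmin hσmin2 hτ1 hτ2 hd2 hr
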